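/- For any d ≥ 3 and each j ∈ {1, 2, 3}, the partial trace over the j-th tensor factor of the density operator T_d = (1/d⁴)·I + (6/(d²(d−2)))·Q_d on ℂ^d ⊗ ℂ^d ⊗ ℂ^d equals the Werner state ρ_d = ((d+1)/d³)·I − (1/d²)·V_d on ℂ^d ⊗ ℂ^d, where Q_d = (1/6)·{ I − V_d⊗I − I⊗V_d − (I⊗V_d)(V_d⊗I)(I⊗V_d) + (I⊗V_d)(V_d⊗I) + (V_d⊗I)(I⊗V_d) }. -/

import Mathlib

open Matrix Kronecker

/-- The flip (swap) operator `V_d` on `ℂ^d ⊗ ℂ^d`, modeled as a matrix: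
`V_d (ψ₁ ⊗ ψ₂) = ψ₂ ⊗ ψ₁`. -/
def flipM (d : ℕ) : Matrix (Fin d × Fin d) (Fin d × Fin d) ℂ :=
  fun p q => if p.1 = q.2 ∧ p.2 = q.1 then 1 else 0

/-- `V_d ⊗ I` on `ℂ^d ⊗ ℂ^d ⊗ ℂ^d`: the Kronecker product `V_d ⊗ₖ I`, reindexed by the
associativity equivalence to the index type `Fin d × Fin d × Fin d`. -/
def V12 (d : ℕ) : Matrix (Fin d × Fin d × Fin d) (Fin d × Fin d × Fin d) ℂ :=
  Matrix.reindex (Equiv.prodAssoc (Fin d) (Fin d) (Fin d))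
    (Equiv.prodAssoc (Fin d) (Fin d) (Fin d))
    (flipM d ⊗ₖ (1 : Matrix (Fin d) (Fin d) ℂ))

/-- `I ⊗ V_d` on `ℂ^d ⊗ ℂ^d ⊗ ℂ^d`. -/
def V23 (d : ℕ) : Matrix (Fin d × Fin d × Fin d) (Fin d × Fin d × Fin d) ℂ :=
  (1 : Matrix (Fin d) (Fin d) ℂ) ⊗ₖ flipM d

/-- `Q_d = (1/6)·{ I − V_d⊗I − I⊗V_d − (I⊗V_d)(V_d⊗I)(I⊗V_d)
      + (I⊗V_d)(V_d⊗I) + (V_d⊗I)(I⊗V_d) }` on `ℂ^d ⊗ ℂ^d ⊗ ℂ^d`. -/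
noncomputable def Q (d : ℕ) : Matrix (Fin d × Fin d × Fin d) (Fin d × Fin d × Fin d) ℂ :=
  ((6 : ℂ)⁻¹) • ((1 : Matrix (Fin d × Fin d × Fin d) (Fin d × Fin d × Fin d) ℂ)
    - V12 d - V23 d - V23 d * V12 d * V23 d + V23 d * V12 d + V12 d * V23 d)


/-- The partial trace over the `j`-th tensor factor (`j = 0,1,2` for the first, second,
third factor) of an operator on `ℂ^d ⊗ ℂ^d ⊗ ℂ^d`, yielding an operator on `ℂ^d ⊗ ℂ^d`. -/
noncomputable def ptr (d : ℕ) (j : Fin 3)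
    (T : Matrix (Fin d × Fin d × Fin d) (Fin d × Fin d × Fin d) ℂ) :
    Matrix (Fin d × Fin d) (Fin d × Fin d) ℂ :=
  match j with
  | 0 => fun p q => ∑ k : Fin d, T (k, p.1, p.2) (k, q.1, q.2)
  | 1 => fun p q => ∑ k : Fin d, T (p.1, k, p.2) (q.1, k, q.2)
  | 2 => fun p q => ∑ k : Fin d, T (p.1, p.2, k) (q.1, q.2, k)

/-- The density source-operator `T_d = (1/d⁴)·I + (6/(d²(d−2)))·Q_d` on `ℂ^d ⊗ ℂ^d ⊗ ℂ^d`. -/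
noncomputable def Tdso (d : ℕ) : Matrix (Fin d × Fin d × Fin d) (Fin d × Fin d × Fin d) ℂ :=
  (((d : ℂ) ^ 4)⁻¹) • (1 : Matrix (Fin d × Fin d × Fin d) (Fin d × Fin d × Fin d) ℂ)
    + ((6 : ℂ) / ((d : ℂ) ^ 2 * ((d : ℂ) - 2))) • Q d

/-- The Werner state `ρ_d = ((d+1)/d³)·I − (1/d²)·V_d` on `ℂ^d ⊗ ℂ^d`. -/
noncomputable def werner (d : ℕ) : Matrix (Fin d × Fin d) (Fin d × Fin d) ℂ :=
  (((d : ℂ) + 1) / (d : ℂ) ^ 3) • (1 : Matrix (Fin d × Fin d) (Fin d × Fin d) ℂ)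
    - ((d : ℂ) ^ 2)⁻¹ • flipM d

/-!
With `A_m = ∑ σ, sign σ • U_σ` on `(R^d)^{⊗m}`, where `σ` runs over `S_m` and `U_σ` permutes the
tensor factors, we have `6 Q_d = A_3` and `I - V_d = A_2`. Tracing out a factor of `U_σ` deletes
the corresponding letter from the cycles of `σ`, with a scalar `d` if `σ` fixes that letter. Of the
`m + 1` permutations that reduce to a given `τ ∈ S_m`, one fixes the letter and has the sign of
`τ`; the other `m` insert it into a cycle and have the opposite sign. Hence the partial trace of
`A_{m+1}` is `(d - m) A_m`, and for `m = 2` the factor `d - 2` cancels the one in `T_d`.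
-/

section PermOperator

variable {ι n R : Type*} [Fintype ι] [DecidableEq n]

/-- The operator on `(R^n)^{⊗ι}` that permutes the tensor factors by `σ`. The standard basis of
the tensor power is indexed by functions `ι → n`. -/
def permOperator [Zero R] [One R] (σ : Equiv.Perm ι) : Matrix (ι → n) (ι → n) R :=
  of fun x y => if x ∘ σ = y then 1 else 0

theorem permOperator_permCongr_symm_apply {κ : Type*} [Fintype κ] [Zero R] [One R]
    (e : κ ≃ ι) (σ : Equiv.Perm ι) (x y : ι → n) :
    (permOperator (e.symm.permCongr σ) : Matrix _ (κ → n) R) (x ∘ e) (y ∘ e) =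
      permOperator σ x y := by
  have relabel : (x ∘ e) ∘ e.symm.permCongr σ = (x ∘ σ) ∘ e := by
    ext a
    simp
  simp only [permOperator, of_apply, relabel, e.surjective.injective_comp_right.eq_iff]

theorem permOperator_one [Zero R] [One R] :
    permOperator (1 : Equiv.Perm ι) = (1 : Matrix (ι → n) (ι → n) R) :=
  rfl

theorem permOperator_mul [DecidableEq ι] [Fintype n] [NonAssocSemiring R] (σ τ : Equiv.Perm ι) :
    (permOperator (σ * τ) : Matrix _ (ι → n) R) = permOperator σ * permOperator τ := by
  ext x y
  rw [mul_apply, Finset.sum_eq_single (x ∘ σ)]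
  · have moves_to_comp : permOperator σ x (x ∘ σ) = (1 : R) := if_pos rfl
    rw [moves_to_comp, one_mul]
    rfl
  · intro z _ hz
    simp [permOperator, hz.symm]
  · simp

variable [DecidableEq ι]

variable (ι n R) in
/-- The antisymmetrizer on `(R^n)^{⊗ι}`, without the factor `1 / |ι|!` that would make it a
projection. -/
def antisymmetrizer [Ring R] : Matrix (ι → n) (ι → n) R :=
  ∑ σ : Equiv.Perm ι, Equiv.Perm.sign σ • permOperator σ

theorem antisymmetrizer_apply_comp_equiv {κ : Type*} [Fintype κ] [DecidableEq κ] [Ring R]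
    (e : κ ≃ ι) (x y : ι → n) :
    antisymmetrizer κ n R (x ∘ e) (y ∘ e) = antisymmetrizer ι n R x y := by
  simp only [antisymmetrizer, Matrix.sum_apply, Matrix.smul_apply]
  rw [← e.symm.permCongr.sum_comp]
  simp only [Equiv.Perm.sign_permCongr, permOperator_permCongr_symm_apply]

end PermOperator

theorem cons_comp_decomposeFin_symm_eq_cons_iff {n : Type*} {m : ℕ} (p : Fin (m + 1))
    (τ : Equiv.Perm (Fin m)) (k : n) (x y : Fin m → n) :
    (Fin.cons k x : Fin (m + 1) → n) ∘ Equiv.Perm.decomposeFin.symm (p, τ) = Fin.cons k y ↔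
      (Fin.cons k x : Fin (m + 1) → n) p = k ∧ x ∘ τ = y := by
  simp only [funext_iff, Fin.forall_fin_succ, Function.comp_apply, Fin.cons_zero, Fin.cons_succ,
    Equiv.Perm.decomposeFin_symm_apply_zero, Equiv.Perm.decomposeFin_symm_apply_succ]
  -- The labels at `0` and `p` are both `k`, so swapping them changes nothing.
  refine and_congr_right fun hp => forall_congr' fun a => ?_
  have labels_eq : (Fin.cons k x : Fin (m + 1) → n) 0 = (Fin.cons k x : Fin (m + 1) → n) p :=
    hp.symm
  rw [Equiv.apply_swap_eq_self labels_eq, Fin.cons_succ]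

section PartialTrace

variable {n R : Type*} [Fintype n] {m : ℕ}

/-- The partial trace over the `j`-th factor of an operator on `(R^n)^{⊗(m+1)}`. -/
def partialTrace [Semiring R] (j : Fin (m + 1)) :
    Matrix (Fin (m + 1) → n) (Fin (m + 1) → n) R →ₗ[R] Matrix (Fin m → n) (Fin m → n) R where
  toFun T := of fun x y => ∑ k, T (j.insertNth k x) (j.insertNth k y)
  map_add' S T := by ext x y; simp [Finset.sum_add_distrib]
  map_smul' c T := by ext x y; simp [Finset.mul_sum]

theorem partialTrace_apply [Semiring R] (j : Fin (m + 1))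
    (T : Matrix (Fin (m + 1) → n) (Fin (m + 1) → n) R) (x y : Fin m → n) :
    partialTrace j T x y = ∑ k, T (j.insertNth k x) (j.insertNth k y) :=
  rfl

variable [DecidableEq n]

theorem partialTrace_one [Semiring R] (j : Fin (m + 1)) :
    partialTrace j (1 : Matrix (Fin (m + 1) → n) (Fin (m + 1) → n) R) =
      (Fintype.card n : R) • 1 := by
  ext x y
  simp [partialTrace_apply, one_apply, Fin.insertNth_inj]

theorem partialTrace_zero_permOperator [Semiring R] (p : Fin (m + 1)) (τ : Equiv.Perm (Fin m)) :
    partialTrace 0 (permOperator (Equiv.Perm.decomposeFin.symm (p, τ))) =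
      (if p = 0 then (Fintype.card n : R) else 1) • (permOperator τ : Matrix _ (Fin m → n) R) := by
  ext x y
  simp only [partialTrace_apply, permOperator, of_apply, Fin.insertNth_zero', Matrix.smul_apply,
    cons_comp_decomposeFin_symm_eq_cons_iff, ite_and]
  cases p using Fin.cases <;> simp [Fin.succ_ne_zero]

theorem partialTrace_zero_antisymmetrizer [Ring R] :
    partialTrace 0 (antisymmetrizer (Fin (m + 1)) n R) =
      ((Fintype.card n : R) - m) • antisymmetrizer (Fin m) n R := by
  have trace_term (p : Fin (m + 1)) (τ : Equiv.Perm (Fin m)) :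
      partialTrace 0 (Equiv.Perm.sign (Equiv.Perm.decomposeFin.symm (p, τ)) •
          (permOperator (Equiv.Perm.decomposeFin.symm (p, τ)) : Matrix _ (Fin (m + 1) → n) R)) =
        (if p = 0 then (Fintype.card n : R) else -1) •
          (Equiv.Perm.sign τ • (permOperator τ : Matrix _ (Fin m → n) R)) := by
    rw [Units.smul_def, map_zsmul, partialTrace_zero_permOperator,
      Equiv.Perm.decomposeFin.symm_sign]
    split_ifs <;> simp [Units.smul_def, smul_comm]
  have sum_coeff : ∑ p : Fin (m + 1), (if p = 0 then (Fintype.card n : R) else -1) =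
      (Fintype.card n : R) - m := by
    simp [Fin.sum_univ_succ, Fin.succ_ne_zero, sub_eq_add_neg]
  calc partialTrace 0 (antisymmetrizer (Fin (m + 1)) n R)
      = ∑ p : Fin (m + 1), ∑ τ : Equiv.Perm (Fin m),
          (if p = 0 then (Fintype.card n : R) else -1) •
            (Equiv.Perm.sign τ • (permOperator τ : Matrix _ (Fin m → n) R)) := by
        rw [antisymmetrizer, map_sum, ← Equiv.Perm.decomposeFin.symm.sum_comp,
          Fintype.sum_prod_type]
        simp only [trace_term]
    _ = ((Fintype.card n : R) - m) • antisymmetrizer (Fin m) n R := by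
        simp only [← Finset.smul_sum, ← Finset.sum_smul, sum_coeff, antisymmetrizer]

theorem partialTrace_antisymmetrizer [Ring R] (j : Fin (m + 1)) :
    partialTrace j (antisymmetrizer (Fin (m + 1)) n R) =
      ((Fintype.card n : R) - m) • antisymmetrizer (Fin m) n R := by
  rw [← partialTrace_zero_antisymmetrizer]
  ext x y
  simp only [partialTrace_apply, ← Fin.cons_comp_cycleRange, antisymmetrizer_apply_comp_equiv]

end PartialTrace

section Flips

variable {d : ℕ}

/-- The identification of the index type `Fin 3 → n` of a threefold tensor power with the iterated
product `n × n × n`, the analogue of `finTwoArrowEquiv`. -/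
def finThreeArrowEquiv (n : Type*) : (Fin 3 → n) ≃ n × n × n where
  toFun x := (x 0, x 1, x 2)
  invFun p := ![p.1, p.2.1, p.2.2]
  left_inv x := by ext i; fin_cases i <;> rfl
  right_inv _ := rfl

theorem ptr_eq_submatrix_partialTrace (j : Fin 3)
    (T : Matrix (Fin d × Fin d × Fin d) (Fin d × Fin d × Fin d) ℂ) :
    ptr d j T =
      (partialTrace j (T.submatrix (finThreeArrowEquiv _) (finThreeArrowEquiv _))).submatrix
        (finTwoArrowEquiv _).symm (finTwoArrowEquiv _).symm := by
  fin_cases j <;> rfl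

theorem submatrix_flipM :
    (flipM d).submatrix (finTwoArrowEquiv _) (finTwoArrowEquiv _) =
      permOperator (Equiv.swap (0 : Fin 2) 1) := by
  ext x y
  simp [flipM, permOperator, funext_iff, Fin.forall_fin_succ, and_comm]

theorem submatrix_V12 :
    (V12 d).submatrix (finThreeArrowEquiv _) (finThreeArrowEquiv _) =
      permOperator (Equiv.swap (0 : Fin 3) 1) := by
  ext x y
  have comp_swap_eq_iff : x ∘ Equiv.swap (0 : Fin 3) 1 = y ↔ x 1 = y 0 ∧ x 0 = y 1 ∧ x 2 = y 2 := by
    simp [funext_iff, Fin.forall_fin_succ, Equiv.swap_apply_of_ne_of_ne]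
  have entry : (V12 d).submatrix (finThreeArrowEquiv _) (finThreeArrowEquiv _) x y =
      flipM d (x 0, x 1) (y 0, y 1) * (1 : Matrix (Fin d) (Fin d) ℂ) (x 2) (y 2) := rfl
  simp only [entry, permOperator, of_apply, comp_swap_eq_iff, flipM, one_apply]
  grind

theorem submatrix_V23 :
    (V23 d).submatrix (finThreeArrowEquiv _) (finThreeArrowEquiv _) =
      permOperator (Equiv.swap (1 : Fin 3) 2) := by
  ext x y
  have comp_swap_eq_iff : x ∘ Equiv.swap (1 : Fin 3) 2 = y ↔ x 0 = y 0 ∧ x 2 = y 1 ∧ x 1 = y 2 := by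
    simp [funext_iff, Fin.forall_fin_succ, Equiv.swap_apply_of_ne_of_ne]
  have entry : (V23 d).submatrix (finThreeArrowEquiv _) (finThreeArrowEquiv _) x y =
      (1 : Matrix (Fin d) (Fin d) ℂ) (x 0) (y 0) * flipM d (x 1, x 2) (y 1, y 2) := rfl
  simp only [entry, permOperator, of_apply, comp_swap_eq_iff, flipM, one_apply]
  grind

theorem antisymmetrizer_fin_two :
    antisymmetrizer (Fin 2) (Fin d) ℂ =
      (1 - flipM d).submatrix (finTwoArrowEquiv _) (finTwoArrowEquiv _) := by
  have univ_perm : (Finset.univ : Finset (Equiv.Perm (Fin 2))) = {1, Equiv.swap 0 1} := by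
    decide
  rw [antisymmetrizer, univ_perm, Finset.sum_pair (by decide)]
  simp only [submatrix_sub, Pi.sub_apply, submatrix_one_equiv, submatrix_flipM, permOperator_one,
    Equiv.Perm.sign_one, one_smul, Equiv.Perm.sign_swap zero_ne_one, Units.neg_smul,
    ← sub_eq_add_neg]

theorem antisymmetrizer_fin_three :
    antisymmetrizer (Fin 3) (Fin d) ℂ =
      ((6 : ℂ) • Q d).submatrix (finThreeArrowEquiv _) (finThreeArrowEquiv _) := by
  have univ_perm : (Finset.univ : Finset (Equiv.Perm (Fin 3))) =
      {1, Equiv.swap 0 1, Equiv.swap 1 2, Equiv.swap 1 2 * Equiv.swap 0 1 * Equiv.swap 1 2,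
        Equiv.swap 1 2 * Equiv.swap 0 1, Equiv.swap 0 1 * Equiv.swap 1 2} := by
    decide
  have sum_signed : antisymmetrizer (Fin 3) (Fin d) ℂ =
      1 - permOperator (Equiv.swap 0 1) - permOperator (Equiv.swap 1 2)
        - permOperator (Equiv.swap 1 2) * permOperator (Equiv.swap 0 1) *
          permOperator (Equiv.swap 1 2)
        + permOperator (Equiv.swap 1 2) * permOperator (Equiv.swap 0 1)
        + permOperator (Equiv.swap 0 1) * permOperator (Equiv.swap 1 2) := by
    rw [antisymmetrizer, univ_perm, Finset.sum_insert (by decide), Finset.sum_insert (by decide),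
      Finset.sum_insert (by decide), Finset.sum_insert (by decide), Finset.sum_pair (by decide)]
    simp only [permOperator_one, permOperator_mul, Equiv.Perm.sign_one, Equiv.Perm.sign_mul,
      Equiv.Perm.sign_swap (by decide : (0 : Fin 3) ≠ 1),
      Equiv.Perm.sign_swap (by decide : (1 : Fin 3) ≠ 2), mul_neg_one, neg_neg,
      Units.neg_smul, one_smul]
    abel
  rw [sum_signed, Q, smul_inv_smul₀ (by norm_num)]
  simp only [submatrix_add, submatrix_sub, Pi.add_apply, Pi.sub_apply, submatrix_one_equiv,
    ← submatrix_mul_equiv _ _ _ (finThreeArrowEquiv (Fin d)), submatrix_V12, submatrix_V23]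

theorem submatrix_Tdso :
    (Tdso d).submatrix (finThreeArrowEquiv _) (finThreeArrowEquiv _) =
      ((d : ℂ) ^ 4)⁻¹ • 1 +
        ((d : ℂ) ^ 2 * ((d : ℂ) - 2))⁻¹ • antisymmetrizer (Fin 3) (Fin d) ℂ := by
  simp only [Tdso, antisymmetrizer_fin_three, submatrix_add, submatrix_smul, Pi.add_apply,
    Pi.smul_apply, submatrix_one_equiv, smul_smul, div_eq_inv_mul]

theorem submatrix_werner (hd : (d : ℂ) ≠ 0) :
    (werner d).submatrix (finTwoArrowEquiv _) (finTwoArrowEquiv _) =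
      ((d : ℂ) ^ 3)⁻¹ • 1 + ((d : ℂ) ^ 2)⁻¹ • antisymmetrizer (Fin 2) (Fin d) ℂ := by
  have coeff_one : ((d : ℂ) + 1) / (d : ℂ) ^ 3 = ((d : ℂ) ^ 3)⁻¹ + ((d : ℂ) ^ 2)⁻¹ := by
    field_simp
    ring
  simp only [werner, antisymmetrizer_fin_two, submatrix_sub, submatrix_smul, Pi.sub_apply,
    Pi.smul_apply, submatrix_one_equiv, coeff_one]
  module

end Flips

/-- For any `d ≥ 3` and each `j ∈ {1,2,3}`, the partial trace over the `j`-th tensor factor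
of `T_d` equals the Werner state `ρ_d` on `ℂ^d ⊗ ℂ^d`. -/
theorem Tdso_partialTrace_eq_werner (d : ℕ) (hd : 3 ≤ d) (j : Fin 3) :
    ptr d j (Tdso d) = werner d := by
  have hd0 : (d : ℂ) ≠ 0 := by exact_mod_cast (by lia : d ≠ 0)
  have hd2 : (d : ℂ) - 2 ≠ 0 := sub_ne_zero.mpr (by exact_mod_cast (by lia : d ≠ 2))
  have coeff_one : ((d : ℂ) ^ 4)⁻¹ * d = ((d : ℂ) ^ 3)⁻¹ := by field_simp
  have coeff_antisymmetrizer :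
      ((d : ℂ) ^ 2 * ((d : ℂ) - 2))⁻¹ * ((d : ℂ) - (2 : ℕ)) = ((d : ℂ) ^ 2)⁻¹ := by
    push_cast
    field_simp
  have partialTrace_eq :
      partialTrace j ((Tdso d).submatrix (finThreeArrowEquiv _) (finThreeArrowEquiv _)) =
        (werner d).submatrix (finTwoArrowEquiv _) (finTwoArrowEquiv _) := by
    rw [submatrix_Tdso, submatrix_werner hd0, map_add, map_smul, map_smul, partialTrace_one,
      partialTrace_antisymmetrizer, Fintype.card_fin, smul_smul, smul_smul, coeff_one,
      coeff_antisymmetrizer]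
  rw [ptr_eq_submatrix_partialTrace, partialTrace_eq, submatrix_submatrix,
    Equiv.self_comp_symm, submatrix_id_id]
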